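/- In the setting below, assume additionally that the closure of Per_H equals M and that δ ∈ (0, ν) is such that X_δ has finitely many maximal chains that are pairwise disjoint, each accumulating at x. Then for every p ∈ X_δ, writing [p] for the maximal chain of X_δ containing p and S_{[p]} = closure(⋃_{q∈[p]} Ŝ_q), one has int(S_{[p]}) ∩ B_δ(x) = (⋃_{q∈[p]} Ŝ_q) ∩ B_δ(x). -/

import Mathlib

open Metric Set

variable {M : Type*} [MetricSpace M]

/-- Iterates of a homeomorphism, indexed by `ℤ`. -/
def iterZ (f : M ≃ₜ M) (k : ℤ) (x : M) : M := (f.toEquiv ^ k) x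

/-- `f` is expansive with expansivity constant `α`. -/
def IsExpansive (f : M ≃ₜ M) (α : ℝ) : Prop :=
  ∀ x y : M, x ≠ y → ∃ k : ℤ, α < dist (iterZ f k x) (iterZ f k y)

/-- Stable set of `x`. -/
def Ws (f : M ≃ₜ M) (x : M) : Set M :=
  {y | Filter.Tendsto (fun k : ℤ => dist (iterZ f k x) (iterZ f k y)) Filter.atTop (nhds 0)}

/-- Unstable set of `x`. -/
def Wu (f : M ≃ₜ M) (x : M) : Set M :=
  {y | Filter.Tendsto (fun k : ℤ => dist (iterZ f k x) (iterZ f k y)) Filter.atBot (nhds 0)}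

/-- Local (`ε`-local) stable set of `x`. -/
def WsLoc (f : M ≃ₜ M) (ε : ℝ) (x : M) : Set M :=
  {y | ∀ k : ℤ, 0 ≤ k → dist (iterZ f k x) (iterZ f k y) ≤ ε}

/-- Local (`ε`-local) unstable set of `x`. -/
def WuLoc (f : M ≃ₜ M) (ε : ℝ) (x : M) : Set M :=
  {y | ∀ k : ℤ, k ≤ 0 → dist (iterZ f k x) (iterZ f k y) ≤ ε}

/-- The model space `ℝ^r × ℝ^{n-r}`. -/
abbrev ModelSp (n r : ℕ) := (Fin r → ℝ) × (Fin (n - r) → ℝ)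

/-- The model hyperbolic linear map `L(a,b) = (a/2, 2b)`. -/
noncomputable def modelL (n r : ℕ) : ModelSp n r → ModelSp n r :=
  fun q => (fun i => q.1 i / 2, fun i => 2 * q.2 i)

/-- Topologically hyperbolic periodic points of index `r` (`Per_H^r`). -/
def PerHr (f : M ≃ₜ M) (n r : ℕ) : Set M :=
  {p | ∃ l : ℕ, 1 ≤ l ∧ (f.toEquiv ^ l) p = p ∧
    ∃ (U : Set M) (V : Set (ModelSp n r)) (h : U ≃ₜ V),
      IsOpen U ∧ IsOpen V ∧ (0 : ModelSp n r) ∈ V ∧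
      ∃ hp : p ∈ U, ((h ⟨p, hp⟩ : V) : ModelSp n r) = 0 ∧
        ∀ z : M, ∀ hz : z ∈ U, ∀ hz' : (f.toEquiv ^ l) z ∈ U,
          ((h ⟨(f.toEquiv ^ l) z, hz'⟩ : V) : ModelSp n r) = modelL n r (h ⟨z, hz⟩)}

/-- All topologically hyperbolic periodic points (`Per_H`). -/
def PerH (f : M ≃ₜ M) (n : ℕ) : Set M := ⋃ r ∈ Finset.range (n + 1), PerHr f n r

/-- `p` admits a local product structure. -/
def AdmitsLPS (f : M ≃ₜ M) (n : ℕ) (p : M) : Prop :=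
  ∃ (k : ℕ) (h : (Fin k → ℝ) × (Fin (n - k) → ℝ) → M) (ε : ℝ),
    0 < ε ∧ Topology.IsEmbedding h ∧ p ∈ Set.range h ∧
    ∀ x : Fin k → ℝ, ∀ y : Fin (n - k) → ℝ,
      h '' ({x} ×ˢ univ) = WsLoc f ε (h (x, y)) ∩ Set.range h ∧
      h '' (univ ×ˢ {y}) = WuLoc f ε (h (x, y)) ∩ Set.range h

/-- `D` has exactly two connected components, namely `V₁` and `V₂`. -/
def TwoComponents {M : Type*} [TopologicalSpace M] (D V₁ V₂ : Set M) : Prop :=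
  V₁ ≠ V₂ ∧
  (∀ y ∈ D, connectedComponentIn D y = V₁ ∨ connectedComponentIn D y = V₂) ∧
  (∃ y ∈ D, connectedComponentIn D y = V₁) ∧ (∃ y ∈ D, connectedComponentIn D y = V₂)

variable {M : Type*} [MetricSpace M]

/-- `S_p = cc_p(W^s(p) ∩ B_ν(x))`. -/
def SpSet (f : M ≃ₜ M) (x : M) (ν : ℝ) (p : M) : Set M :=
  connectedComponentIn (Ws f p ∩ Metric.ball x ν) p

/-- `U_p = cc_p(W^u(p) ∩ B_ν(x))`. -/
def UpSet (f : M ≃ₜ M) (x : M) (ν : ℝ) (p : M) : Set M :=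
  connectedComponentIn (Wu f p ∩ Metric.ball x ν) p

/-- `Ŝ_p = B_ν(x) \ cc_x(B_ν(x) \ S_p)`. -/
def ShatSet (f : M ≃ₜ M) (x : M) (ν : ℝ) (p : M) : Set M :=
  Metric.ball x ν \ connectedComponentIn (Metric.ball x ν \ SpSet f x ν p) x

/-- `X_δ = Per_H^{n-1} ∩ B_δ(x)`. -/
def Xdelta (f : M ≃ₜ M) (n : ℕ) (x : M) (δ : ℝ) : Set M :=
  PerHr f n (n - 1) ∩ Metric.ball x δ

/-- `C` is a chain of `(X_δ, ≤)`, where `p ≤ q ↔ Ŝ_p ⊆ Ŝ_q`. -/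
def IsChainIn (f : M ≃ₜ M) (n : ℕ) (x : M) (ν δ : ℝ) (C : Set M) : Prop :=
  C ⊆ Xdelta f n x δ ∧
  ∀ p ∈ C, ∀ q ∈ C, ShatSet f x ν p ⊆ ShatSet f x ν q ∨ ShatSet f x ν q ⊆ ShatSet f x ν p

/-- `C` is a maximal chain of `(X_δ, ≤)`. -/
def IsMaxChainIn (f : M ≃ₜ M) (n : ℕ) (x : M) (ν δ : ℝ) (C : Set M) : Prop :=
  IsChainIn f n x ν δ C ∧ ∀ C' : Set M, IsChainIn f n x ν δ C' → C ⊆ C' → C' = C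

/-!
Write `O` for the union of the `Ŝ_q`, `q ∈ C`. Unless `O` is the whole ball, every `Ŝ_q` lies in a
larger one minus its wall `S_q'`, because `C` accumulates at `x`; hence `O` is open, every compact
subset of `O` lies in a single `Ŝ_q`, and any two boundary points of `O` in the ball are
approximated by pairs of points on a common wall, so that they lie in each other's `2ε`-local stable
sets.

Suppose that `y` is in the interior of `closure O` but not in `O`. A point of the `ε`-local unstable
set of `y` on a small sphere around `y` cannot be a boundary point of `O`, by expansivity, so this
compact slice lies in a single open `Ŝ_q \ S_q`, and by semicontinuity the same holds for all points
near `y`. Take such a point `p ∉ Ŝ_q` in `Per_H`. It is not a sink, because an open stable leaf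
through `p` would contain `y` and coincide with a wall, so two arcs of its unstable set, disjoint
except at `p`, leave `p` in opposite directions and reach the sphere inside `Ŝ_q`. Both of them
cross `S_q`, and by expansivity in the same point, which has to be `p`. But `p ∉ Ŝ_q`.
-/

open Filter Topology Function

section Iterates

variable (f : M ≃ₜ M)

lemma iterZ_natCast (k : ℕ) : iterZ f k = f^[k] := by
  ext x
  rw [iterZ, zpow_natCast, ← Equiv.Perm.iterate_eq_pow]
  rfl

lemma iterZ_add (j k : ℤ) (x : M) : iterZ f (j + k) x = iterZ f j (iterZ f k x) := by
  simp only [iterZ, zpow_add, Equiv.Perm.coe_mul, comp_apply]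

lemma iterZ_symm (k : ℤ) : iterZ f.symm k = iterZ f (-k) := by
  ext x
  have hsymm : f.symm.toEquiv = (f.toEquiv : Equiv.Perm M)⁻¹ := rfl
  rw [iterZ, iterZ, hsymm, inv_zpow']

lemma continuous_iterZ (k : ℤ) : Continuous (iterZ f k) := by
  obtain ⟨m, rfl | rfl⟩ := k.eq_nat_or_neg
  · exact iterZ_natCast f m ▸ f.continuous.iterate m
  · rw [← iterZ_symm, iterZ_natCast]
    exact f.symm.continuous.iterate m

end Iterates

section StableSets

variable {f : M ≃ₜ M} {x y z p q : M} {l m : ℕ}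

lemma Wu_eq_Ws_symm (f : M ≃ₜ M) (x : M) : Wu f x = Ws f.symm x := by
  ext y
  simp only [Wu, Ws, mem_ofPred_eq, iterZ_symm]
  rw [← map_neg_atTop, tendsto_map'_iff]
  rfl

lemma WuLoc_eq_WsLoc_symm (f : M ≃ₜ M) (ε : ℝ) (x : M) : WuLoc f ε x = WsLoc f.symm ε x := by
  ext y
  simp only [WuLoc, WsLoc, mem_ofPred_eq, iterZ_symm]
  exact (Equiv.neg ℤ).forall_congr (by simp)

lemma mem_Ws_iff :
    y ∈ Ws f x ↔ Tendsto (fun k : ℕ => dist (f^[k] x) (f^[k] y)) atTop (𝓝 0) := by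
  simp only [Ws, mem_ofPred_eq, ← Nat.map_cast_int_atTop, tendsto_map'_iff, comp_def,
    iterZ_natCast]

lemma mem_Ws_self (f : M ≃ₜ M) (x : M) : x ∈ Ws f x := by
  simp [mem_Ws_iff]

lemma mem_Ws_of_mem_Ws_of_mem_Ws (hx : z ∈ Ws f x) (hy : z ∈ Ws f y) : y ∈ Ws f x := by
  rw [mem_Ws_iff] at *
  refine squeeze_zero (fun _ => dist_nonneg) (fun k => dist_triangle_right _ _ (f^[k] z)) ?_
  simpa using hx.add hy

lemma iterate_mem_Ws_iff (k : ℕ) : f^[k] y ∈ Ws f (f^[k] x) ↔ y ∈ Ws f x := by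
  simp only [mem_Ws_iff, ← iterate_add_apply]
  exact tendsto_add_atTop_iff_nat (f := fun j => dist (f^[j] x) (f^[j] y)) k

lemma eq_of_isPeriodicPt_of_mem_Ws (hl : 0 < l) (hm : 0 < m) (hp : IsPeriodicPt f l p)
    (hq : IsPeriodicPt f m q) (h : q ∈ Ws f p) : p = q := by
  have hconst (k : ℕ) : dist (f^[l * m * k] p) (f^[l * m * k] q) = dist p q := by
    rw [((hp.mul_const m).mul_const k).eq, ((hq.const_mul l).mul_const k).eq]
  have htends := (mem_Ws_iff.1 h).comp (tendsto_id.const_mul_atTop' (Nat.mul_pos hl hm))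
  simp only [comp_def, id, hconst] at htends
  exact dist_eq_zero.1 (tendsto_nhds_unique tendsto_const_nhds htends)

lemma mem_Ws_of_tendsto_iterate (hl : 0 < l) (hp : IsPeriodicPt f l p)
    (h : Tendsto (fun k : ℕ => (f^[l])^[k] z) atTop (𝓝 p)) : z ∈ Ws f p := by
  have hresidue (j : ℕ) :
      Tendsto (fun k : ℕ => dist (f^[j] p) (f^[j] ((f^[l])^[k] z))) atTop (𝓝 0) := by
    simpa using (tendsto_const_nhds (x := f^[j] p)).dist
      (((f.continuous.iterate j).tendsto p).comp h)
  have hsum : Tendsto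
      (fun k : ℕ => ∑ j ∈ Finset.range l, dist (f^[j] p) (f^[j] ((f^[l])^[k] z))) atTop (𝓝 0) := by
    simpa using tendsto_finsetSum (Finset.range l) fun j _ => hresidue j
  rw [mem_Ws_iff]
  refine squeeze_zero (fun _ => dist_nonneg) (fun k => ?_)
    (hsum.comp (Nat.tendsto_div_const_atTop hl.ne'))
  have hdecomp (w : M) : f^[k] w = f^[k % l] ((f^[l])^[k / l] w) := by
    rw [← iterate_mul, ← iterate_add_apply, Nat.mod_add_div]
  have hp' : (f^[l])^[k / l] p = p := IsFixedPt.iterate hp _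
  rw [hdecomp p, hdecomp z, hp']
  exact Finset.single_le_sum (f := fun j => dist (f^[j] p) (f^[j] ((f^[l])^[k / l] z)))
    (fun _ _ => dist_nonneg) (Finset.mem_range.2 (Nat.mod_lt k hl))

lemma isOpen_Ws_of_mem_nhds (hl : 0 < l) (hp : IsPeriodicPt f l p) (h : Ws f p ∈ 𝓝 p) :
    IsOpen (Ws f p) := by
  refine isOpen_iff_mem_nhds.2 fun z hz => ?_
  have hperiod (k : ℕ) : f^[l * k] p = p := hp.mul_const k
  have hz' : Tendsto (fun k : ℕ => f^[l * k] z) atTop (𝓝 p) := by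
    have := (mem_Ws_iff.1 hz).comp (tendsto_id.const_mul_atTop' hl)
    simp only [comp_def, id, hperiod] at this
    exact tendsto_iff_dist_tendsto_zero.2 (by simpa only [dist_comm] using this)
  obtain ⟨k, hk⟩ := (hz'.eventually (eventually_mem_nhds_iff.2 h)).exists
  filter_upwards [(f.continuous.iterate (l * k)).continuousAt.preimage_mem_nhds hk] with w hw
  rw [mem_preimage] at hw
  rwa [← iterate_mem_Ws_iff (l * k), hperiod]

end StableSets

section LocalStableSets

variable {f : M ≃ₜ M} {ε : ℝ} {x y z : M}

lemma isClosed_setOf_mem_WsLoc (f : M ≃ₜ M) (ε : ℝ) :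
    IsClosed {w : M × M | w.2 ∈ WsLoc f ε w.1} := by
  have hInter : {w : M × M | w.2 ∈ WsLoc f ε w.1} =
      ⋂ k : ℤ, ⋂ _ : 0 ≤ k, {w | dist (iterZ f k w.1) (iterZ f k w.2) ≤ ε} := by
    ext w
    simp [WsLoc]
  rw [hInter]
  refine isClosed_iInter fun k => isClosed_iInter fun _ => isClosed_le ?_ continuous_const
  exact ((continuous_iterZ f k).comp continuous_fst).dist
    ((continuous_iterZ f k).comp continuous_snd)

lemma isClosed_WsLoc (f : M ≃ₜ M) (ε : ℝ) (x : M) : IsClosed (WsLoc f ε x) :=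
  (isClosed_setOf_mem_WsLoc f ε).preimage (.prodMk_right x)

lemma mem_WsLoc_add {ε' : ℝ} (hy : y ∈ WsLoc f ε x) (hz : z ∈ WsLoc f ε' x) :
    z ∈ WsLoc f (ε + ε') y := fun k hk =>
  (dist_triangle_left _ _ _).trans (add_le_add (hy k hk) (hz k hk))

lemma eventually_WsLoc_inter_subset [CompactSpace M] {K G : Set M} (hK : IsClosed K)
    (hG : IsOpen G) (h : WsLoc f ε y ∩ K ⊆ G) : ∀ᶠ p in 𝓝 y, WsLoc f ε p ∩ K ⊆ G := by
  have hclosed : IsClosed (Prod.fst '' ({w : M × M | w.2 ∈ WsLoc f ε w.1} ∩ univ ×ˢ (K \ G))) :=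
    isClosedMap_fst_of_compactSpace _
      ((isClosed_setOf_mem_WsLoc f ε).inter (isClosed_univ.prod (hK.sdiff hG)))
  have hy : y ∉ Prod.fst '' ({w : M × M | w.2 ∈ WsLoc f ε w.1} ∩ univ ×ˢ (K \ G)) := by
    rintro ⟨⟨_, w⟩, ⟨hw, -, hwK, hwG⟩, rfl⟩
    exact hwG (h ⟨hw, hwK⟩)
  filter_upwards [hclosed.isOpen_compl.mem_nhds hy] with p hp w ⟨hw, hwK⟩
  by_contra hwG
  exact hp ⟨(p, w), ⟨hw, mem_univ p, hwK, hwG⟩, rfl⟩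

end LocalStableSets

namespace IsExpansive

variable {f : M ≃ₜ M} {α ε : ℝ} {p q x y z : M}

lemma eq_of_mem_WsLoc_of_mem_WuLoc {ε' : ℝ} (hf : IsExpansive f α) (hε : ε ≤ α) (hε' : ε' ≤ α)
    (hs : y ∈ WsLoc f ε x) (hu : y ∈ WuLoc f ε' x) : y = x := by
  by_contra hne
  obtain ⟨k, hk⟩ := hf x y (Ne.symm hne)
  exact hk.not_ge ((le_total 0 k).elim (fun h => (hs k h).trans hε) fun h => (hu k h).trans hε')

lemma subsingleton_WsLoc_inter_WuLoc (hf : IsExpansive f α) (hε : 2 * ε ≤ α) :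
    (WsLoc f ε p ∩ WuLoc f ε q).Subsingleton := by
  rintro u ⟨hus, huu⟩ w ⟨hws, hwu⟩
  rw [two_mul] at hε
  refine (hf.eq_of_mem_WsLoc_of_mem_WuLoc hε hε (mem_WsLoc_add hus hws) ?_).symm
  rw [WuLoc_eq_WsLoc_symm] at *
  exact mem_WsLoc_add huu hwu

lemma WsLoc_subset_Ws [CompactSpace M] (hf : IsExpansive f α) (hε : ε ≤ α) (x : M) :
    WsLoc f ε x ⊆ Ws f x := by
  intro y hy
  by_contra hnot
  obtain ⟨η, hη, hfreq⟩ : ∃ η > 0, ∃ᶠ k : ℕ in atTop, η ≤ dist (f^[k] x) (f^[k] y) := by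
    simpa [mem_Ws_iff, Metric.tendsto_nhds, frequently_atTop] using hnot
  have hcompact : IsCompact {w : M × M | η ≤ dist w.1 w.2} :=
    (isClosed_le continuous_const continuous_dist).isCompact
  obtain ⟨⟨a, b⟩, hab, φ, hφ, hlim⟩ :=
    hcompact.tendsto_subseq' (x := fun k => (f^[k] x, f^[k] y)) hfreq
  have hclose (k : ℤ) : dist (iterZ f k a) (iterZ f k b) ≤ ε := by
    have hcont : Continuous fun w : M × M => dist (iterZ f k w.1) (iterZ f k w.2) :=
      ((continuous_iterZ f k).comp continuous_fst).dist ((continuous_iterZ f k).comp continuous_snd)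
    refine le_of_tendsto ((hcont.tendsto _).comp hlim) ?_
    filter_upwards [eventually_ge_atTop (-k).toNat] with m hm
    simp only [comp_apply, ← iterZ_natCast, ← iterZ_add]
    have := hφ.le_apply (x := m)
    exact hy _ (by omega)
  have hba : b = a :=
    hf.eq_of_mem_WsLoc_of_mem_WuLoc hε hε (fun k _ => hclose k) fun k _ => hclose k
  exact hη.not_ge (by simpa [hba] using hab)

lemma eq_of_forall_iterate_mem_WuLoc (hf : IsExpansive f α) (hε : ε ≤ α) {l : ℕ} (hl : 0 < l)
    (hp : IsPeriodicPt f l p) (h : ∀ k : ℕ, (f^[l])^[k] z ∈ WuLoc f ε p) : z = p := by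
  by_contra hne
  obtain ⟨i, hi⟩ := hf p z (Ne.symm hne)
  have hpast : i - (l * i.natAbs : ℕ) ≤ 0 := by
    have : i.natAbs ≤ l * i.natAbs := Nat.le_mul_of_pos_left _ hl
    omega
  have hsplit (w : M) : iterZ f i w = iterZ f (i - (l * i.natAbs : ℕ)) (f^[l * i.natAbs] w) := by
    rw [← iterZ_natCast, ← iterZ_add, sub_add_cancel]
  have hle := h i.natAbs _ hpast
  rw [← iterate_mul] at hle
  rw [hsplit, hsplit, (hp.mul_const i.natAbs).eq] at hi
  exact hi.not_ge (hle.trans hε)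

end IsExpansive

section DilationExtension

variable {E X : Type*} [NormedAddCommGroup E] [NormedSpace ℝ E] {φ : E → X} {g : X → X} {ρ : ℝ}

lemma exists_lt_two_pow_mul (hρ : 0 < ρ) (a : ℝ) : ∃ k : ℕ, a < 2 ^ k * ρ := by
  obtain ⟨k, hk⟩ := pow_unbounded_of_one_lt (a / ρ) one_lt_two
  exact ⟨k, (div_lt_iff₀ hρ).1 hk⟩

lemma norm_inv_two_pow_smul_lt_iff {k : ℕ} {v : E} :
    ‖((2 : ℝ) ^ k)⁻¹ • v‖ < ρ ↔ ‖v‖ < 2 ^ k * ρ := by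
  rw [norm_smul, norm_inv, norm_pow, Real.norm_two, inv_mul_lt_iff₀ (by positivity)]

lemma exists_eq_iterate_of_dilation (hρ : 0 < ρ)
    (h : ∀ v, ‖(2 : ℝ) • v‖ < ρ → g (φ v) = φ ((2 : ℝ) • v)) :
    ∃ Φ : E → X, ∀ (k : ℕ) (v : E), ‖v‖ < 2 ^ k * ρ → Φ v = g^[k] (φ (((2 : ℝ) ^ k)⁻¹ • v)) := by
  have hstep (k j : ℕ) (hkj : k ≤ j) (v : E) (hv : ‖v‖ < 2 ^ k * ρ) :
      g^[j] (φ (((2 : ℝ) ^ j)⁻¹ • v)) = g^[k] (φ (((2 : ℝ) ^ k)⁻¹ • v)) := by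
    induction j, hkj using Nat.le_induction with
    | base => rfl
    | succ j hkj ih =>
      have hhalf : (2 : ℝ) • ((2 : ℝ) ^ (j + 1))⁻¹ • v = ((2 : ℝ) ^ j)⁻¹ • v := by
        rw [smul_smul, pow_succ']
        field_simp
      have hsmall : ‖((2 : ℝ) ^ j)⁻¹ • v‖ < ρ :=
        norm_inv_two_pow_smul_lt_iff.2 (hv.trans_le (by gcongr; norm_num))
      rw [iterate_succ_apply, h _ (hhalf ▸ hsmall), hhalf, ih]
  choose N hN using fun v : E => exists_lt_two_pow_mul hρ ‖v‖
  refine ⟨fun v => g^[N v] (φ (((2 : ℝ) ^ N v)⁻¹ • v)), fun k v hv => ?_⟩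
  rcases le_total k (N v) with hk | hk
  · exact hstep k (N v) hk v hv
  · exact (hstep (N v) k hk v (hN v)).symm

lemma exists_continuous_injective_semiconj_dilation [TopologicalSpace X] (hg : Continuous g)
    (hg' : Injective g) {s : Set E} (hs : s ∈ 𝓝 0) (hφ : ContinuousOn φ s) (hφ' : InjOn φ s)
    (h : ∀ᶠ v in 𝓝 0, g (φ v) = φ ((2 : ℝ) • v)) :
    ∃ Φ : E → X, Continuous Φ ∧ Injective Φ ∧ Φ =ᶠ[𝓝 0] φ ∧ Semiconj Φ ((2 : ℝ) • ·) g := by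
  obtain ⟨ρ, hρ, hball⟩ := Metric.mem_nhds_iff.1 (inter_mem hs h)
  have hconj (v : E) (hv : ‖(2 : ℝ) • v‖ < ρ) : g (φ v) = φ ((2 : ℝ) • v) := by
    rw [norm_smul, Real.norm_two] at hv
    exact (hball (mem_ball_zero_iff.2 (by linarith [norm_nonneg v]))).2
  obtain ⟨Φ, hΦ⟩ := exists_eq_iterate_of_dilation hρ hconj
  have hscale {k : ℕ} {v : E} (hv : ‖v‖ < 2 ^ k * ρ) : ((2 : ℝ) ^ k)⁻¹ • v ∈ s :=
    (hball (mem_ball_zero_iff.2 (norm_inv_two_pow_smul_lt_iff.2 hv))).1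
  refine ⟨Φ, continuous_iff_continuousAt.2 fun v => ?_, fun v w hvw => ?_, ?_, fun v => ?_⟩
  · obtain ⟨k, hk⟩ := exists_lt_two_pow_mul hρ ‖v‖
    have hopen : {w : E | ‖w‖ < 2 ^ k * ρ} ∈ 𝓝 v :=
      (isOpen_lt continuous_norm continuous_const).mem_nhds hk
    have hcont : ContinuousOn (fun w => g^[k] (φ (((2 : ℝ) ^ k)⁻¹ • w))) {w | ‖w‖ < 2 ^ k * ρ} :=
      (hg.iterate k).comp_continuousOn
        (hφ.comp (continuous_const_smul _).continuousOn fun w hw => hscale hw)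
    exact (hcont.congr fun w hw => hΦ k w hw).continuousAt hopen
  · obtain ⟨k, hk⟩ := exists_lt_two_pow_mul hρ (max ‖v‖ ‖w‖)
    obtain ⟨hv, hw⟩ := max_lt_iff.1 hk
    rw [hΦ k v hv, hΦ k w hw] at hvw
    exact smul_right_injective E (by positivity : ((2 : ℝ) ^ k)⁻¹ ≠ 0)
      (hφ' (hscale hv) (hscale hw) (hg'.iterate k hvw))
  · filter_upwards [ball_mem_nhds 0 hρ] with v hv
    simpa using hΦ 0 v (by simpa using hv)
  · obtain ⟨k, hk⟩ := exists_lt_two_pow_mul hρ ‖v‖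
    have h2v : ‖(2 : ℝ) • v‖ < 2 ^ (k + 1) * ρ := by
      rw [norm_smul, Real.norm_two, pow_succ']
      linarith
    rw [hΦ (k + 1) _ h2v, hΦ k v hk, iterate_succ_apply', smul_smul, pow_succ]
    field_simp

end DilationExtension

section HyperbolicPeriodicPoints

variable {f : M ≃ₜ M} {n r l : ℕ} {p : M}

lemma range_subset_Wu_of_semiconj_dilation {E : Type*} [NormedAddCommGroup E] [NormedSpace ℝ E]
    {Φ : E → M} (hl : 0 < l) (hΦ : Continuous Φ) (h : Semiconj Φ ((2 : ℝ) • ·) f^[l]) :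
    range Φ ⊆ Wu f (Φ 0) := by
  have hsymm : Semiconj Φ ((2 : ℝ)⁻¹ • ·) f.symm^[l] :=
    h.inverses_right (smul_inv_smul₀ two_ne_zero) (f.left_inv'.iterate l)
  have hperiod : IsPeriodicPt f.symm l (Φ 0) := by
    simpa [IsPeriodicPt, IsFixedPt] using (hsymm 0).symm
  rintro _ ⟨v, rfl⟩
  rw [Wu_eq_Ws_symm]
  refine mem_Ws_of_tendsto_iterate hl hperiod ?_
  have hiter (k : ℕ) : (f.symm^[l])^[k] (Φ v) = Φ (((2 : ℝ)⁻¹ ^ k) • v) := by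
    rw [← (hsymm.iterate_right k) v, smul_iterate]
  simp only [hiter]
  have hpow : Tendsto (fun k : ℕ => ((2 : ℝ)⁻¹ ^ k) • v) atTop (𝓝 0) := by
    simpa using (tendsto_pow_atTop_nhds_zero_of_lt_one (by positivity : (0 : ℝ) ≤ 2⁻¹)
      (by norm_num)).smul_const v
  exact (hΦ.tendsto 0).comp hpow

lemma exists_chart_of_mem_PerHr (hp : p ∈ PerHr f n r) :
    ∃ l, 0 < l ∧ IsPeriodicPt f l p ∧ ∃ e : OpenPartialHomeomorph (ModelSp n r) M,
      0 ∈ e.source ∧ e 0 = p ∧ ∀ᶠ v in 𝓝 0, f^[l] (e v) = e (modelL n r v) := by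
  obtain ⟨l, hl, hper, U, V, h, hU, hV, h0V, hpU, hp0, hconj⟩ := hp
  have hpow (z : M) : (f.toEquiv ^ l) z = f^[l] z := by
    rw [← Equiv.Perm.iterate_eq_pow]
    rfl
  simp only [hpow] at hper hconj
  have hV0 : Nonempty V := ⟨⟨0, h0V⟩⟩
  let ι := hV.isOpenEmbedding_subtypeVal.toOpenPartialHomeomorph _
  let κ := (hU.isOpenEmbedding_subtypeVal.comp h.symm.isOpenEmbedding).toOpenPartialHomeomorph _
  let e : OpenPartialHomeomorph (ModelSp n r) M := ι.symm.trans κ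
  have he (w : V) : e w = h.symm w :=
    congrArg (fun w' : V => (h.symm w' : M)) (ι.left_inv (mem_univ w))
  have hsource : e.source = V := by simp [e, ι, κ]
  have he0 : e 0 = p := by
    rw [he ⟨0, h0V⟩, (h.symm_apply_eq (y := ⟨0, h0V⟩)).2 (Subtype.ext hp0.symm)]
  have hreturn : ∀ᶠ v in 𝓝 0, f^[l] (e v) ∈ U := by
    have hcont : ContinuousAt (fun v => f^[l] (e v)) 0 :=
      (f.continuous.iterate l).continuousAt.comp (e.continuousAt (hsource ▸ h0V))
    exact hcont (hU.mem_nhds (by simpa only [he0, hper]))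
  refine ⟨l, hl, hper, e, hsource ▸ h0V, he0, ?_⟩
  filter_upwards [hreturn, hV.mem_nhds h0V] with v hvU hvV
  rw [he ⟨v, hvV⟩] at hvU ⊢
  have hL := hconj (h.symm ⟨v, hvV⟩) (h.symm ⟨v, hvV⟩).2 hvU
  simp only [Subtype.coe_eta, Homeomorph.apply_symm_apply] at hL
  rw [← hL, he, h.symm_apply_apply]

lemma isOpen_Ws_of_mem_PerHr (hr : n ≤ r) (hp : p ∈ PerHr f n r) : IsOpen (Ws f p) := by
  obtain ⟨l, hl, hper, e, h0, rfl, hconj⟩ := exists_chart_of_mem_PerHr hp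
  have hempty : IsEmpty (Fin (n - r)) := by
    rw [Nat.sub_eq_zero_of_le hr]
    infer_instance
  have hL (v : ModelSp n r) : modelL n r ((2 : ℝ) • v) = v := by
    ext i
    · simp [modelL]
    · exact hempty.elim i
  have hsymm : ∀ᶠ v in 𝓝 0, f.symm^[l] (e v) = e ((2 : ℝ) • v) := by
    have h2 : Tendsto ((2 : ℝ) • · : ModelSp n r → ModelSp n r) (𝓝 0) (𝓝 0) := by
      simpa using (continuous_const_smul (2 : ℝ)).tendsto (0 : ModelSp n r)
    filter_upwards [h2.eventually hconj] with v hv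
    rw [hL] at hv
    rw [← hv]
    exact f.left_inv'.iterate l _
  obtain ⟨Φ, hΦ, -, hΦe, hsemi⟩ := exists_continuous_injective_semiconj_dilation
    (f.symm.continuous.iterate l) (f.symm.injective.iterate l) (e.open_source.mem_nhds h0)
    e.continuousOn e.injOn hsymm
  refine isOpen_Ws_of_mem_nhds hl hper ?_
  have hWs : range Φ ⊆ Ws f (e 0) := by
    rw [← hΦe.eq_of_nhds]
    exact (range_subset_Wu_of_semiconj_dilation hl hΦ hsemi).trans
      (Wu_eq_Ws_symm f.symm _).subset
  rw [← e.map_nhds_eq h0, mem_map]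
  filter_upwards [hΦe] with v hv
  exact hWs ⟨v, hv⟩

lemma exists_unstable_line (hr : r < n) (hp : p ∈ PerHr f n r) :
    ∃ l, 0 < l ∧ ∃ Γ : ℝ → M, Γ 0 = p ∧ Continuous Γ ∧ Injective Γ ∧
      Semiconj Γ ((2 : ℝ) • ·) f^[l] := by
  obtain ⟨l, hl, hper, e, h0, rfl, hconj⟩ := exists_chart_of_mem_PerHr hp
  have : Nonempty (Fin (n - r)) := ⟨⟨0, Nat.sub_pos_of_lt hr⟩⟩
  let ι : ℝ → ModelSp n r := fun t => (0, fun _ => t)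
  have hι : Continuous ι := by fun_prop
  have hι' : Injective ι := fun _ _ hst =>
    congr_fun (congr_arg Prod.snd hst) (Classical.arbitrary _)
  have hι0 : Tendsto ι (𝓝 0) (𝓝 0) := hι.tendsto 0
  have hL (t : ℝ) : modelL n r (ι t) = ι ((2 : ℝ) • t) := by
    simp [modelL, ι]
    rfl
  have hdilate : ∀ᶠ t in 𝓝 0, f^[l] (e (ι t)) = e (ι ((2 : ℝ) • t)) := by
    filter_upwards [hι0.eventually hconj] with t ht
    rw [ht, hL]
  obtain ⟨Γ, hΓ, hΓ', hΓe, hsemi⟩ := exists_continuous_injective_semiconj_dilation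
    (f.continuous.iterate l) (f.injective.iterate l) (hι0 (e.open_source.mem_nhds h0))
    (e.continuousOn.comp hι.continuousOn fun t ht => ht)
    (e.injOn.comp hι'.injOn fun t ht => ht) hdilate
  exact ⟨l, hl, Γ, hΓe.eq_of_nhds, hΓ, hΓ', hsemi⟩

end HyperbolicPeriodicPoints

section UnstableArcs

lemma exists_first_hit {h : ℝ → ℝ} {a b c : ℝ} (hh : Continuous h) (hab : a ≤ b) (ha : h a ≤ c)
    (hb : c ≤ h b) : ∃ t ∈ Icc a b, h t = c ∧ ∀ s ∈ Icc a t, h s ≤ c := by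
  have hcompact : IsCompact (Icc a b ∩ h ⁻¹' {c}) :=
    isCompact_Icc.inter_right (isClosed_singleton.preimage hh)
  obtain ⟨t, ⟨ht, htc⟩, hleast⟩ := hcompact.exists_isLeast
    (intermediate_value_Icc hab hh.continuousOn ⟨ha, hb⟩)
  refine ⟨t, ht, htc, fun s hs => not_lt.1 fun hcs => ?_⟩
  obtain ⟨u, hu, huc⟩ := intermediate_value_Icc hs.1 hh.continuousOn ⟨ha, hcs.le⟩
  have htu : t ≤ u := hleast ⟨⟨hu.1, hu.2.trans (hs.2.trans ht.2)⟩, huc⟩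
  rw [le_antisymm hs.2 (htu.trans hu.2), htc] at hcs
  exact lt_irrefl c hcs

variable {f : M ≃ₜ M} {α ε ν c : ℝ} {n r l : ℕ} {p x y : M}

lemma exists_exit_of_semiconj_dilation {Γ : ℝ → M} (hf : IsExpansive f α) (hε : ε ≤ α) (hl : 0 < l)
    (hΓ : Continuous Γ) (hsemi : Semiconj Γ ((2 : ℝ) • ·) f^[l]) (hne : Γ 1 ≠ Γ 0)
    (hU : UpSet f x ν (Γ 0) ⊆ WuLoc f ε (Γ 0)) (hp : Γ 0 ∈ closedBall y c)
    (hball : closedBall y c ⊆ ball x ν) :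
    ∃ t, 0 ≤ t ∧ Γ t ∈ sphere y c ∧ Γ '' Icc 0 t ⊆ UpSet f x ν (Γ 0) := by
  have hper : IsPeriodicPt f l (Γ 0) := by
    simpa [IsPeriodicPt, IsFixedPt] using (hsemi 0).symm
  have hsub (t : ℝ) (ht : 0 ≤ t) (h : ∀ s ∈ Icc 0 t, Γ s ∈ closedBall y c) :
      Γ '' Icc 0 t ⊆ UpSet f x ν (Γ 0) := by
    refine (isPreconnected_Icc.image Γ hΓ.continuousOn).subset_connectedComponentIn
      ⟨0, ⟨le_rfl, ht⟩, rfl⟩ ?_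
    rintro _ ⟨s, hs, rfl⟩
    exact ⟨range_subset_Wu_of_semiconj_dilation hl hΓ hsemi ⟨s, rfl⟩, hball (h s hs)⟩
  obtain ⟨s, hs, hsc⟩ : ∃ s, 0 ≤ s ∧ c < dist (Γ s) y := by
    by_contra! hstay
    refine hne (hf.eq_of_forall_iterate_mem_WuLoc hε hl hper fun k => ?_)
    have hk : (f^[l])^[k] (Γ 1) = Γ (2 ^ k) := by
      rw [← (hsemi.iterate_right k) 1, smul_iterate]
      simp
    rw [hk]
    exact hU (hsub (2 ^ k) (by positivity) (fun s hs => hstay s hs.1)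
      ⟨2 ^ k, right_mem_Icc.2 (by positivity), rfl⟩)
  obtain ⟨t, ht, htc, hle⟩ := exists_first_hit (hΓ.dist continuous_const) hs hp hsc.le
  exact ⟨t, ht.1, htc, hsub t ht.1 hle⟩

lemma exists_unstable_arcs (hf : IsExpansive f α) (hε : ε ≤ α) (hr : r < n) (hp : p ∈ PerHr f n r)
    (hU : UpSet f x ν p ⊆ WuLoc f ε p) (hpy : p ∈ closedBall y c)
    (hball : closedBall y c ⊆ ball x ν) :
    ∃ H₁ H₂ : Set M, H₁ ∩ H₂ ⊆ {p} ∧ ∀ H ∈ ({H₁, H₂} : Set (Set M)), IsPreconnected H ∧ p ∈ H ∧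
      H ⊆ UpSet f x ν p ∧ (H ∩ sphere y c).Nonempty := by
  obtain ⟨l, hl, Γ, rfl, hΓ, hΓ', hsemi⟩ := exists_unstable_line hr hp
  have hrev : Semiconj (Γ ∘ Neg.neg) ((2 : ℝ) • ·) f^[l] := fun t => by
    simpa using hsemi (-t)
  obtain ⟨t₁, ht₁, hexit₁, hsub₁⟩ := exists_exit_of_semiconj_dilation hf hε hl hΓ hsemi
    (hΓ'.ne one_ne_zero) hU hpy hball
  obtain ⟨t₂, ht₂, hexit₂, hsub₂⟩ := exists_exit_of_semiconj_dilation hf hε hl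
    (hΓ.comp continuous_neg) hrev ((hΓ'.comp neg_injective).ne one_ne_zero) (by simpa using hU)
    (by simpa using hpy) hball
  rw [comp_apply, neg_zero] at hsub₂
  refine ⟨Γ '' Icc 0 t₁, (Γ ∘ Neg.neg) '' Icc 0 t₂, ?_, ?_⟩
  · rintro _ ⟨⟨s, hs, rfl⟩, ⟨s', hs', heq⟩⟩
    have hs0 : s = 0 := le_antisymm (by linarith [hΓ' heq, hs'.1]) hs.1
    rw [hs0, mem_singleton_iff]
  · rintro H (rfl | rfl)
    · exact ⟨isPreconnected_Icc.image _ hΓ.continuousOn, ⟨0, ⟨le_rfl, ht₁⟩, rfl⟩, hsub₁,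
        Γ t₁, ⟨t₁, right_mem_Icc.2 ht₁, rfl⟩, hexit₁⟩
    · exact ⟨isPreconnected_Icc.image _ (hΓ.comp continuous_neg).continuousOn,
        ⟨0, ⟨le_rfl, ht₂⟩, by simp⟩, hsub₂, _, ⟨t₂, right_mem_Icc.2 ht₂, rfl⟩, hexit₂⟩

end UnstableArcs

section Filling

variable {X : Type*} [TopologicalSpace X] {B S N : Set X} {a b x : X}

/-- The set `S` together with the parts of `B` that it separates from `x`. For `B = B_ν(x)` and
`S = S_p` this is `Ŝ_p`. -/
def filling (B S : Set X) (x : X) : Set X := B \ connectedComponentIn (B \ S) x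

lemma filling_subset : filling B S x ⊆ B := sdiff_subset

lemma subset_filling (hS : S ⊆ B) : S ⊆ filling B S x := fun _ hs =>
  ⟨hS hs, fun hcc => (connectedComponentIn_subset _ _ hcc).2 hs⟩

lemma filling_of_mem (hx : x ∈ S) : filling B S x = B := by
  rw [filling, connectedComponentIn_eq_empty fun h => h.2 hx, sdiff_empty]

lemma inter_nonempty_of_mem_filling (hN : IsPreconnected N) (hNB : N ⊆ B) (ha : a ∈ N)
    (ha' : a ∉ filling B S x) (hb : b ∈ N) (hb' : b ∈ filling B S x) : (N ∩ S).Nonempty := by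
  by_contra hempty
  have hNS : N ⊆ B \ S := fun z hz => ⟨hNB hz, fun hzS => hempty ⟨z, hz, hzS⟩⟩
  have hax : a ∈ connectedComponentIn (B \ S) x := by
    by_contra hax
    exact ha' ⟨hNB ha, hax⟩
  have hbx := hN.subset_connectedComponentIn ha hNS hb
  rw [← connectedComponentIn_eq hax] at hbx
  exact hb'.2 hbx

lemma isOpen_diff_filling [LocallyConnectedSpace X] (h : IsOpen (B \ S)) :
    IsOpen (B \ filling B S x) := by
  rw [filling, sdiff_sdiff_cancel_left ((connectedComponentIn_subset _ _).trans sdiff_subset)]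
  exact h.connectedComponentIn

lemma isOpen_filling_diff [LocallyConnectedSpace X] (h : IsOpen (B \ S)) :
    IsOpen (filling B S x \ S) := by
  refine isOpen_iff_forall_mem_open.2 fun z hz =>
    ⟨connectedComponentIn (B \ S) z, fun w hw => ?_, h.connectedComponentIn,
      mem_connectedComponentIn ⟨hz.1.1, hz.2⟩⟩
  have hwBS := connectedComponentIn_subset _ _ hw
  refine ⟨⟨hwBS.1, fun hwx => hz.1.2 ?_⟩, hwBS.2⟩
  rw [connectedComponentIn_eq hwx, ← connectedComponentIn_eq hw]
  exact mem_connectedComponentIn ⟨hz.1.1, hz.2⟩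

/-- The sets `S q`, `q ∈ C`, are disjoint connected relatively closed subsets of the open set `B`,
with fillings totally ordered by inclusion, and their indices accumulate at the common base point
`x ∈ B`, which they all avoid. -/
structure IsCutChain (B : Set X) (x : X) (S : X → Set X) (C : Set X) : Prop where
  isOpen : IsOpen B
  base_mem : x ∈ B
  base_mem_closure : x ∈ closure C
  mem : ∀ q ∈ C, q ∈ S q
  subset : ∀ q ∈ C, S q ⊆ B
  base_notMem : ∀ q ∈ C, x ∉ S q
  isPreconnected : ∀ q ∈ C, IsPreconnected (S q)
  isOpen_diff : ∀ q ∈ C, IsOpen (B \ S q)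
  pairwiseDisjoint : C.PairwiseDisjoint S
  isChain : IsChain (fun p q => filling B (S p) x ⊆ filling B (S q) x) C

namespace IsCutChain

variable {S : X → Set X} {C K U V : Set X} {q : X}

lemma notMem_filling (h : IsCutChain B x S C) (hq : q ∈ C) : x ∉ filling B (S q) x := fun hx =>
  hx.2 (mem_connectedComponentIn ⟨h.base_mem, h.base_notMem q hq⟩)

variable [LocallyConnectedSpace X]

lemma exists_filling_subset_diff (h : IsCutChain B x S C) (hq : q ∈ C) :
    ∃ q' ∈ C, filling B (S q) x ⊆ filling B (S q') x \ S q' := by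
  obtain ⟨q', ⟨-, hq'q⟩, hq'⟩ := mem_closure_iff.1 h.base_mem_closure _
    (isOpen_diff_filling (h.isOpen_diff q hq)) ⟨h.base_mem, h.notMem_filling hq⟩
  have hq'_self : q' ∈ filling B (S q') x := subset_filling (h.subset q' hq') (h.mem q' hq')
  have hne : q ≠ q' := fun heq => hq'q (heq ▸ hq'_self)
  have hle : filling B (S q) x ⊆ filling B (S q') x :=
    (h.isChain hq hq' hne).resolve_right fun hge => hq'q (hge hq'_self)
  refine ⟨q', hq', fun z hz => ⟨hle hz, fun hzS => ?_⟩⟩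
  obtain ⟨w, hw', hw⟩ := inter_nonempty_of_mem_filling (h.isPreconnected q' hq') (h.subset q' hq')
    (h.mem q' hq') hq'q hzS hz
  exact disjoint_left.1 (h.pairwiseDisjoint hq hq' hne) hw hw'

lemma iUnion_filling_eq (h : IsCutChain B x S C) :
    ⋃ q ∈ C, filling B (S q) x = ⋃ q ∈ C, filling B (S q) x \ S q := by
  refine Subset.antisymm (iUnion₂_subset fun q hq => ?_) (iUnion₂_mono fun q _ => sdiff_subset)
  obtain ⟨q', hq', hsub⟩ := h.exists_filling_subset_diff hq
  exact hsub.trans (subset_biUnion_of_mem (u := fun q => filling B (S q) x \ S q) hq')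

lemma isOpen_iUnion_filling (h : IsCutChain B x S C) : IsOpen (⋃ q ∈ C, filling B (S q) x) := by
  rw [h.iUnion_filling_eq]
  exact isOpen_biUnion fun q hq => isOpen_filling_diff (h.isOpen_diff q hq)

lemma exists_subset_of_isCompact (h : IsCutChain B x S C) (hK : IsCompact K)
    (hKC : K ⊆ ⋃ q ∈ C, filling B (S q) x) : ∃ q ∈ C, K ⊆ filling B (S q) x \ S q := by
  obtain ⟨q₀, hq₀⟩ : C.Nonempty := closure_nonempty_iff.1 ⟨x, h.base_mem_closure⟩
  have : Nonempty C := ⟨⟨q₀, hq₀⟩⟩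
  rw [h.iUnion_filling_eq, biUnion_eq_iUnion] at hKC
  have hdir : Directed (· ⊆ ·) fun q : C => filling B (S q) x \ S q := by
    intro ⟨p, hp⟩ ⟨q, hq⟩
    obtain ⟨m, hm, hpm, hqm⟩ : ∃ m ∈ C, filling B (S p) x ⊆ filling B (S m) x ∧
        filling B (S q) x ⊆ filling B (S m) x :=
      (h.isChain.total hp hq).elim (fun hpq => ⟨q, hq, hpq, Subset.rfl⟩)
        fun hqp => ⟨p, hp, Subset.rfl, hqp⟩
    obtain ⟨m', hm', hsub⟩ := h.exists_filling_subset_diff hm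
    exact ⟨⟨m', hm'⟩, sdiff_subset.trans (hpm.trans hsub), sdiff_subset.trans (hqm.trans hsub)⟩
  obtain ⟨⟨q, hq⟩, hKq⟩ := hK.elim_directed_cover _
    (fun q : C => isOpen_filling_diff (h.isOpen_diff q q.2)) hKC hdir
  exact ⟨q, hq, hKq⟩

lemma exists_forall_inter_nonempty (h : IsCutChain B x S C)
    (ha : a ∈ closure (⋃ q ∈ C, filling B (S q) x)) (haB : a ∈ B)
    (ha' : a ∉ ⋃ q ∈ C, filling B (S q) x) (hU : U ∈ 𝓝 a) :
    ∃ p ∈ C, ∀ q ∈ C, filling B (S p) x ⊆ filling B (S q) x → (U ∩ S q).Nonempty := by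
  obtain ⟨N, hN, hNpre, hNUB⟩ := locallyConnectedSpace_iff_connected_subsets.1 ‹_› a (U ∩ B)
    (inter_mem hU (h.isOpen.mem_nhds haB))
  obtain ⟨b, hbN, hb⟩ := mem_closure_iff_nhds.1 ha N hN
  obtain ⟨p, hp, hbp⟩ := mem_iUnion₂.1 hb
  refine ⟨p, hp, fun q hq hpq => ?_⟩
  have haq : a ∉ filling B (S q) x := fun haq => ha' (mem_biUnion hq haq)
  exact (inter_nonempty_of_mem_filling hNpre (fun _ hz => (hNUB hz).2) (mem_of_mem_nhds hN) haq
    hbN (hpq hbp)).mono (inter_subset_inter_left _ fun _ hz => (hNUB hz).1)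

lemma exists_inter_nonempty_and_inter_nonempty (h : IsCutChain B x S C)
    (ha : a ∈ closure (⋃ q ∈ C, filling B (S q) x)) (haB : a ∈ B)
    (ha' : a ∉ ⋃ q ∈ C, filling B (S q) x)
    (hb : b ∈ closure (⋃ q ∈ C, filling B (S q) x)) (hbB : b ∈ B)
    (hb' : b ∉ ⋃ q ∈ C, filling B (S q) x) (hU : U ∈ 𝓝 a) (hV : V ∈ 𝓝 b) :
    ∃ q ∈ C, (U ∩ S q).Nonempty ∧ (V ∩ S q).Nonempty := by
  obtain ⟨p, hp, hpU⟩ := h.exists_forall_inter_nonempty ha haB ha' hU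
  obtain ⟨q, hq, hqV⟩ := h.exists_forall_inter_nonempty hb hbB hb' hV
  rcases h.isChain.total hp hq with hpq | hqp
  · exact ⟨q, hq, hpU q hq hpq, hqV q hq Subset.rfl⟩
  · exact ⟨p, hp, hpU p hp Subset.rfl, hqV p hp hqp⟩

end IsCutChain

end Filling

section CutsByStableSets

variable {f : M ≃ₜ M} {α ε ν c : ℝ} {n r : ℕ} {p q x y z : M} {C N : Set M}

lemma mem_PerH_iff : p ∈ PerH f n ↔ ∃ r ≤ n, p ∈ PerHr f n r := by
  simp [PerH]

lemma Xdelta_subset {δ : ℝ} (hδ : δ ≤ ν) : Xdelta f n x δ ⊆ PerH f n ∩ ball x ν := fun _ hp =>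
  ⟨mem_PerH_iff.2 ⟨n - 1, n.sub_le 1, hp.1⟩, ball_subset_ball hδ hp.2⟩

lemma SpSet_subset (f : M ≃ₜ M) (x : M) (ν : ℝ) (p : M) : SpSet f x ν p ⊆ Ws f p ∩ ball x ν :=
  connectedComponentIn_subset _ _

lemma mem_SpSet_self (hp : p ∈ ball x ν) : p ∈ SpSet f x ν p :=
  mem_connectedComponentIn ⟨mem_Ws_self f p, hp⟩

lemma eq_of_mem_SpSet_of_mem_SpSet (hp : p ∈ PerH f n) (hq : q ∈ PerH f n)
    (hzp : z ∈ SpSet f x ν p) (hzq : z ∈ SpSet f x ν q) : p = q := by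
  obtain ⟨_, -, hp⟩ := mem_PerH_iff.1 hp
  obtain ⟨_, -, hq⟩ := mem_PerH_iff.1 hq
  obtain ⟨l, hl, hpl, -⟩ := exists_chart_of_mem_PerHr hp
  obtain ⟨m, hm, hqm, -⟩ := exists_chart_of_mem_PerHr hq
  exact eq_of_isPeriodicPt_of_mem_Ws hl hm hpl hqm
    (mem_Ws_of_mem_Ws_of_mem_Ws (SpSet_subset f x ν p hzp).1 (SpSet_subset f x ν q hzq).1)

lemma exists_mem_WuLoc_inter_sphere_notMem (hf : IsExpansive f α) (hε : ε ≤ α)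
    (hεα : 2 * ε ≤ α) (hlocq : SpSet f x ν q ⊆ WsLoc f ε q)
    (hlocp : UpSet f x ν p ⊆ WuLoc f ε p) (hr : r < n) (hp : p ∈ PerHr f n r)
    (hpq : p ∉ ShatSet f x ν q) (hpy : p ∈ closedBall y c) (hball : closedBall y c ⊆ ball x ν) :
    ∃ z ∈ WuLoc f ε p ∩ sphere y c, z ∉ ShatSet f x ν q := by
  by_contra! hsub
  obtain ⟨H₁, H₂, hinter, hH⟩ := exists_unstable_arcs hf hε hr hp hlocp hpy hball
  have hcross : ∀ H ∈ ({H₁, H₂} : Set (Set M)), (H ∩ SpSet f x ν q).Nonempty := by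
    intro H hHmem
    obtain ⟨hpre, hpH, hHU, w, hwH, hwc⟩ := hH H hHmem
    exact inter_nonempty_of_mem_filling hpre
      (fun z hz => (connectedComponentIn_subset _ _ (hHU hz)).2) hpH hpq hwH
      (hsub w ⟨hlocp (hHU hwH), hwc⟩)
  obtain ⟨u, hu, huS⟩ := hcross H₁ (.inl rfl)
  obtain ⟨w, hw, hwS⟩ := hcross H₂ (.inr rfl)
  have huw : u = w := hf.subsingleton_WsLoc_inter_WuLoc hεα
    ⟨hlocq huS, hlocp ((hH H₁ (.inl rfl)).2.2.1 hu)⟩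
    ⟨hlocq hwS, hlocp ((hH H₂ (.inr rfl)).2.2.1 hw)⟩
  have hup : u = p := hinter ⟨hu, huw ▸ hw⟩
  exact hpq (subset_filling ((SpSet_subset f x ν q).trans inter_subset_right) (hup ▸ huS))

lemma isOpen_ball_diff_SpSet [CompactSpace M] (hf : IsExpansive f α) (hε : ε ≤ α)
    (hp : p ∈ ball x ν) (hloc : SpSet f x ν p ⊆ WsLoc f ε p) :
    IsOpen (ball x ν \ SpSet f x ν p) := by
  have hWs : closure (SpSet f x ν p) ⊆ Ws f p :=
    (closure_minimal hloc (isClosed_WsLoc f ε p)).trans (hf.WsLoc_subset_Ws hε p)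
  have hpre : IsPreconnected (closure (SpSet f x ν p) ∩ ball x ν) :=
    isPreconnected_connectedComponentIn.subset_closure
      (subset_inter subset_closure fun z hz => (SpSet_subset f x ν p hz).2) inter_subset_left
  have hclosed : closure (SpSet f x ν p) ∩ ball x ν ⊆ SpSet f x ν p :=
    hpre.subset_connectedComponentIn ⟨subset_closure (mem_SpSet_self hp), hp⟩
      (inter_subset_inter_left _ hWs)
  have heq : ball x ν \ SpSet f x ν p = ball x ν \ closure (SpSet f x ν p) :=
    Subset.antisymm (fun z hz => ⟨hz.1, fun hzS => hz.2 (hclosed ⟨hzS, hz.1⟩)⟩)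
      (sdiff_subset_sdiff_right subset_closure)
  rw [heq]
  exact isOpen_ball.sdiff isClosed_closure

lemma isCutChain_SpSet [CompactSpace M] (hf : IsExpansive f α) (hε : ε ≤ α)
    (hloc : ∀ q ∈ C, SpSet f x ν q ⊆ WsLoc f ε q) (hC : C ⊆ PerH f n ∩ ball x ν)
    (hchain : IsChain (fun p q => ShatSet f x ν p ⊆ ShatSet f x ν q) C) (hxC : x ∈ closure C)
    (hx : ∀ q ∈ C, x ∉ SpSet f x ν q) : IsCutChain (ball x ν) x (SpSet f x ν) C where
  isOpen := isOpen_ball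
  base_mem := by
    obtain ⟨q, hq⟩ := closure_nonempty_iff.1 ⟨x, hxC⟩
    exact mem_ball_self (pos_of_mem_ball (hC hq).2)
  base_mem_closure := hxC
  mem q hq := mem_SpSet_self (hC hq).2
  subset q _ := (SpSet_subset f x ν q).trans inter_subset_right
  base_notMem := hx
  isPreconnected q _ := isPreconnected_connectedComponentIn
  isOpen_diff q hq := isOpen_ball_diff_SpSet hf hε (hC hq).2 (hloc q hq)
  pairwiseDisjoint p hp q hq hne := disjoint_left.2 fun _ hzp hzq =>
    hne (eq_of_mem_SpSet_of_mem_SpSet (hC hp).1 (hC hq).1 hzp hzq)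
  isChain := hchain

variable [LocallyConnectedSpace M]

lemma mem_WsLoc_of_mem_closure_iUnion_ShatSet (h : IsCutChain (ball x ν) x (SpSet f x ν) C)
    (hloc : ∀ q ∈ C, SpSet f x ν q ⊆ WsLoc f ε q)
    (hy : y ∈ closure (⋃ q ∈ C, ShatSet f x ν q)) (hyB : y ∈ ball x ν)
    (hy' : y ∉ ⋃ q ∈ C, ShatSet f x ν q)
    (hz : z ∈ closure (⋃ q ∈ C, ShatSet f x ν q)) (hzB : z ∈ ball x ν)
    (hz' : z ∉ ⋃ q ∈ C, ShatSet f x ν q) : z ∈ WsLoc f (2 * ε) y := by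
  suffices (y, z) ∈ closure {w : M × M | w.2 ∈ WsLoc f (2 * ε) w.1} from
    (isClosed_setOf_mem_WsLoc f (2 * ε)).closure_subset this
  refine mem_closure_iff_nhds.2 fun W hW => ?_
  obtain ⟨U, hU, V, hV, hUV⟩ := mem_nhds_prod_iff.1 hW
  obtain ⟨q, hq, ⟨u, huU, huS⟩, ⟨v, hvV, hvS⟩⟩ :=
    h.exists_inter_nonempty_and_inter_nonempty hy hyB hy' hz hzB hz' hU hV
  refine ⟨(u, v), hUV ⟨huU, hvV⟩, ?_⟩
  rw [mem_ofPred_eq, two_mul]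
  exact mem_WsLoc_add (hloc q hq huS) (hloc q hq hvS)

lemma exists_eventually_WuLoc_inter_sphere_subset [CompactSpace M]
    (h : IsCutChain (ball x ν) x (SpSet f x ν) C) (hf : IsExpansive f α) (hε : ε ≤ α)
    (hεα : 2 * ε ≤ α) (hloc : ∀ q ∈ C, SpSet f x ν q ⊆ WsLoc f ε q)
    (hy : y ∉ ⋃ q ∈ C, ShatSet f x ν q) (hc : 0 < c)
    (hcO : closedBall y c ⊆ closure (⋃ q ∈ C, ShatSet f x ν q) ∩ ball x ν) :
    ∃ q ∈ C, ∀ᶠ p in 𝓝 y, WuLoc f ε p ∩ sphere y c ⊆ ShatSet f x ν q := by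
  have hycl := hcO (mem_closedBall_self hc.le)
  have hK : WuLoc f ε y ∩ sphere y c ⊆ ⋃ q ∈ C, ShatSet f x ν q := by
    intro z ⟨hzu, hzc⟩
    by_contra hz
    have hzcl := hcO (sphere_subset_closedBall hzc)
    have hzs := mem_WsLoc_of_mem_closure_iUnion_ShatSet h hloc hycl.1 hycl.2 hy hzcl.1 hzcl.2 hz
    exact ne_of_mem_sphere hzc hc.ne' (hf.eq_of_mem_WsLoc_of_mem_WuLoc hεα hε hzs hzu)
  simp only [WuLoc_eq_WsLoc_symm] at hK ⊢
  obtain ⟨q, hq, hKq⟩ := h.exists_subset_of_isCompact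
    ((isClosed_WsLoc f.symm ε y).inter isClosed_sphere).isCompact hK
  refine ⟨q, hq, ?_⟩
  filter_upwards [eventually_WsLoc_inter_subset isClosed_sphere
    (isOpen_filling_diff (h.isOpen_diff q hq)) hKq] with p hp
  exact hp.trans sdiff_subset

lemma subset_SpSet_of_isOpen_Ws [CompactSpace M] (hf : IsExpansive f α) (hε : ε ≤ α)
    (hloc : SpSet f x ν p ⊆ WsLoc f ε p) (hWs : IsOpen (Ws f p)) (hN : IsPreconnected N)
    (hNB : N ⊆ ball x ν) (hpN : p ∈ N) : N ⊆ SpSet f x ν p := by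
  have hpS : p ∈ SpSet f x ν p := mem_SpSet_self (hNB hpN)
  refine hN.subset_left_of_subset_union (hWs.inter isOpen_ball).connectedComponentIn
    (isOpen_ball_diff_SpSet hf hε (hNB hpN) hloc) disjoint_sdiff_right ?_ ⟨p, hpN, hpS⟩
  exact hNB.trans (subset_union_right.trans_eq union_sdiff_self.symm)

lemma not_isOpen_Ws_of_mem_nhds_of_mem_closure [CompactSpace M]
    (h : IsCutChain (ball x ν) x (SpSet f x ν) C) (hf : IsExpansive f α) (hε : ε ≤ α)
    (hC : C ⊆ PerH f n) (hy : y ∈ closure (⋃ q ∈ C, ShatSet f x ν q))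
    (hy' : y ∉ ⋃ q ∈ C, ShatSet f x ν q) (hN : IsPreconnected N) (hNy : N ∈ 𝓝 y)
    (hNB : N ⊆ ball x ν) (hp : p ∈ PerH f n) (hloc : SpSet f x ν p ⊆ WsLoc f ε p)
    (hpN : p ∈ N) : ¬ IsOpen (Ws f p) := by
  intro hWs
  have hNS := subset_SpSet_of_isOpen_Ws hf hε hloc hWs hN hNB hpN
  have hyN := mem_of_mem_nhds hNy
  obtain ⟨q, hq, hqN⟩ := h.exists_forall_inter_nonempty hy (hNB hyN) hy' hNy
  obtain ⟨z, hzN, hzq⟩ := hqN q hq Subset.rfl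
  obtain rfl : p = q := eq_of_mem_SpSet_of_mem_SpSet hp (hC hq) (hNS hzN) hzq
  exact hy' (mem_biUnion hq (subset_filling (h.subset p hq) (hNS hyN)))

lemma interior_closure_iUnion_ShatSet_inter_ball_subset [CompactSpace M]
    (h : IsCutChain (ball x ν) x (SpSet f x ν) C) (hf : IsExpansive f α) (hε : ε ≤ α)
    (hεα : 2 * ε ≤ α)
    (hi : ∀ p ∈ PerH f n ∩ ball x ν, SpSet f x ν p ⊆ WsLoc f ε p ∧ UpSet f x ν p ⊆ WuLoc f ε p)
    (hdense : Dense (PerH f n)) (hC : C ⊆ PerH f n ∩ ball x ν) :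
    interior (closure (⋃ q ∈ C, ShatSet f x ν q)) ∩ ball x ν ⊆ ⋃ q ∈ C, ShatSet f x ν q := by
  intro y hy
  by_contra hyO
  have hloc (q : M) (hq : q ∈ C) : SpSet f x ν q ⊆ WsLoc f ε q := (hi q (hC hq)).1
  obtain ⟨c, hc, hcO⟩ := nhds_basis_closedBall.mem_iff.1
    ((isOpen_interior.inter isOpen_ball).mem_nhds hy)
  have hcB : closedBall y c ⊆ ball x ν := hcO.trans inter_subset_right
  obtain ⟨q, hq, hnear⟩ := exists_eventually_WuLoc_inter_sphere_subset h hf hε hεα hloc hyO hc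
    (hcO.trans (inter_subset_inter_left _ interior_subset))
  have hfar : ball x ν \ ShatSet f x ν q ∈ 𝓝 y :=
    (isOpen_diff_filling (h.isOpen_diff q hq)).mem_nhds
      ⟨hy.2, fun hyq => hyO (mem_biUnion hq hyq)⟩
  obtain ⟨N, hNy, hN, hNc⟩ :=
    locallyConnectedSpace_iff_connected_subsets.1 ‹_› y _ (closedBall_mem_nhds y hc)
  obtain ⟨p, hpH, ⟨hpsub, hpB, hpq⟩, hpN⟩ :=
    hdense.inter_nhds_nonempty (inter_mem (inter_mem hnear hfar) hNy)
  obtain ⟨hlocs, hlocu⟩ := hi p ⟨hpH, hpB⟩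
  obtain ⟨r, -, hpr⟩ := mem_PerH_iff.1 hpH
  have hWs : ¬ IsOpen (Ws f p) := not_isOpen_Ws_of_mem_nhds_of_mem_closure h hf hε
    (hC.trans inter_subset_left) (interior_subset hy.1) hyO hN hNy (hNc.trans hcB) hpH hlocs hpN
  have hr : r < n := not_le.1 fun hr => hWs (isOpen_Ws_of_mem_PerHr hr hpr)
  obtain ⟨z, hz, hzq⟩ := exists_mem_WuLoc_inter_sphere_notMem hf hε hεα (hloc q hq) hlocu hr hpr
    hpq (hNc hpN) hcB
  exact hzq (hpsub hz)

theorem interior_closure_iUnion_ShatSet_inter_ball [CompactSpace M] (hf : IsExpansive f α)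
    (hε : 0 ≤ ε) (hεα : 2 * ε ≤ α)
    (hi : ∀ p ∈ PerH f n ∩ ball x ν, SpSet f x ν p ⊆ WsLoc f ε p ∧ UpSet f x ν p ⊆ WuLoc f ε p)
    (hdense : Dense (PerH f n)) (hC : C ⊆ PerH f n ∩ ball x ν)
    (hchain : IsChain (fun p q => ShatSet f x ν p ⊆ ShatSet f x ν q) C) (hxC : x ∈ closure C) :
    interior (closure (⋃ q ∈ C, ShatSet f x ν q)) ∩ ball x ν = ⋃ q ∈ C, ShatSet f x ν q := by
  have hOB : ⋃ q ∈ C, ShatSet f x ν q ⊆ ball x ν := iUnion₂_subset fun _ _ => filling_subset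
  by_cases hx : ∃ q ∈ C, x ∈ SpSet f x ν q
  · obtain ⟨q, hq, hxq⟩ := hx
    have hO : ⋃ q ∈ C, ShatSet f x ν q = ball x ν :=
      hOB.antisymm ((filling_of_mem hxq).ge.trans (subset_biUnion_of_mem (u := ShatSet f x ν) hq))
    rw [hO, inter_eq_right]
    exact interior_maximal subset_closure isOpen_ball
  · push Not at hx
    have hεα' : ε ≤ α := by linarith
    have h : IsCutChain (ball x ν) x (SpSet f x ν) C :=
      isCutChain_SpSet hf hεα' (fun q hq => (hi q (hC hq)).1) hC hchain hxC hx
    refine (interior_closure_iUnion_ShatSet_inter_ball_subset h hf hεα' hεα hi hdense hC).antisymm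
      (subset_inter ?_ hOB)
    exact interior_maximal subset_closure h.isOpen_iUnion_filling

end CutsByStableSets

theorem stmt14_general {M : Type*} [MetricSpace M] [CompactSpace M] [LocallyConnectedSpace M]
    {n : ℕ} {f : M ≃ₜ M} {α ε ν δ : ℝ} {x : M} {C : Set M} (hf : IsExpansive f α) (hε : 0 ≤ ε)
    (hεα : 2 * ε ≤ α)
    (hi : ∀ p ∈ PerH f n ∩ ball x ν, SpSet f x ν p ⊆ WsLoc f ε p ∧ UpSet f x ν p ⊆ WuLoc f ε p)
    (hdense : Dense (PerH f n)) (hC : C ⊆ PerH f n ∩ ball x ν)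
    (hchain : IsChain (fun p q => ShatSet f x ν p ⊆ ShatSet f x ν q) C) (hxC : x ∈ closure C)
    (hδ : δ ≤ ν) :
    interior (closure (⋃ q ∈ C, ShatSet f x ν q)) ∩ ball x δ =
      (⋃ q ∈ C, ShatSet f x ν q) ∩ ball x δ := by
  have hint := interior_closure_iUnion_ShatSet_inter_ball hf hε hεα hi hdense hC hchain hxC
  conv_rhs => rw [← hint, inter_assoc, inter_eq_right.2 (ball_subset_ball hδ)]

/-- **Lemma.** `int(S_{[p]}) ∩ B_δ(x) = (⋃_{q ∈ [p]} Ŝ_q) ∩ B_δ(x)`. -/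
theorem stmt14
    {M : Type*} [MetricSpace M] [CompactSpace M] [ConnectedSpace M]
    (n : ℕ) [ChartedSpace (EuclideanSpace ℝ (Fin n)) M]
    (f : M ≃ₜ M) (α : ℝ) (hα : 0 < α) (hexp : IsExpansive f α)
    (x : M) (hx : ¬ AdmitsLPS f n x)
    (ε : ℝ) (hε : 0 < ε) (hεα : 2 * ε < α) (ν : ℝ) (hν : 0 < ν)
    (hi : ∀ p ∈ PerH f n ∩ Metric.ball x ν,
      SpSet f x ν p ⊆ WsLoc f ε p ∧ UpSet f x ν p ⊆ WuLoc f ε p)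
    (hii : ∀ p ∈ PerHr f n (n - 1) ∩ Metric.ball x ν,
      ∃ V₁ V₂ : Set M, TwoComponents (Metric.ball x ν \ SpSet f x ν p) V₁ V₂)
    (hdense : closure (PerH f n) = Set.univ)
    (δ : ℝ) (hδ : δ ∈ Set.Ioo (0 : ℝ) ν)
    (hfin : {C : Set M | IsMaxChainIn f n x ν δ C}.Finite)
    (hdisj : ∀ C₁ C₂ : Set M, IsMaxChainIn f n x ν δ C₁ → IsMaxChainIn f n x ν δ C₂ →
      C₁ ≠ C₂ → Disjoint C₁ C₂)
    (hacc : ∀ C : Set M, IsMaxChainIn f n x ν δ C → x ∈ closure C)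
    :
    ∀ p ∈ Xdelta f n x δ, ∀ C : Set M, IsMaxChainIn f n x ν δ C → p ∈ C →
      interior (closure (⋃ q ∈ C, ShatSet f x ν q)) ∩ Metric.ball x δ =
        (⋃ q ∈ C, ShatSet f x ν q) ∩ Metric.ball x δ := by
  have := ChartedSpace.locallyConnectedSpace (EuclideanSpace ℝ (Fin n)) M
  exact fun _ _ C hC _ => stmt14_general hexp hε.le hεα.le hi (dense_iff_closure_eq.2 hdense)
    (hC.1.1.trans (Xdelta_subset hδ.2.le)) (fun p hp q hq _ => hC.1.2 p hp q hq) (hacc C hC) hδ.2.le
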